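/- Let γ=(B,M,S,A,Â) be a market with middlemen and γ*=(B,S,A*) the associated two-sided assignment market. For every coalition T⊆N, the worth of T in the middlemen market game is bounded above by the worth of its buyers and sellers in the associated assignment game: v_γ(T) ≤ w_{γ*}(T∩(B∪S)). -/

import Mathlib

/-!
Matching markets with middlemen (Atay, Bahel, Solymosi).

Players are of three sorts: buyers `B`, middlemen `M`, sellers `S`
(three disjoint nonempty finite types); the player set is `Player B M S = B ⊕ M ⊕ S`.
An (functional representation of a) `T`-matching assigns to each buyer either nothing
(the buyer is single), a seller (direct trade), or a middleman together with a seller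
(mediated trade); distinct buyers get distinct sellers, and all agents involved lie in `T`.
A middleman may mediate several trades.
-/

open scoped Classical

noncomputable section

/-- The set of players of a market with middlemen: buyers `B`, middlemen `M`, sellers `S`. -/
abbrev Player (B M S : Type*) := B ⊕ M ⊕ S

/-- Functional representation of a matching in the market with middlemen: each buyer is
unmatched (`none`), matched directly to a seller (`some (none, k)`), or matched to a seller
through a middleman (`some (some j, k)`). -/
abbrev MMatch (B M S : Type*) := B → Option (Option M × S)

namespace Middlemen

variable {B M S : Type*}

/-- A buyer as a player. -/
def buyer (i : B) : Player B M S := Sum.inl i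

/-- A middleman as a player. -/
def mid (j : M) : Player B M S := Sum.inr (Sum.inl j)

/-- A seller as a player. -/
def seller (k : S) : Player B M S := Sum.inr (Sum.inr k)

/-- `f` is a `T`-matching in the market with middlemen: every basic coalition used by `f`
is contained in `T` and no seller is matched to two distinct buyers.  (Buyers, middlemen
and sellers of `T` not appearing in any trade are singletons of the matching.) -/
def IsMatching (T : Finset (Player B M S)) (f : MMatch B M S) : Prop :=
  (∀ i o k, f i = some (o, k) →
      buyer i ∈ T ∧ seller k ∈ T ∧ ∀ j, o = some j → mid j ∈ T) ∧
  (∀ i i' o o' k, f i = some (o, k) → f i' = some (o', k) → i = i')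

variable [Fintype B] [Fintype M] [Fintype S]

/-- The value `Σ_{(i,k)∈μ} a_{ik} + Σ_{(i,j,k)∈μ} â_{ijk}` of a matching in the market
with middlemen with direct-trade surplus matrix `A` and mediated-trade surpluses `Ah`. -/
def mval (A : B → S → ℝ) (Ah : B → M → S → ℝ) (f : MMatch B M S) : ℝ :=
  ∑ i, (match f i with
    | none => 0
    | some (none, k) => A i k
    | some (some j, k) => Ah i j k)

/-- The TU game `v_γ` associated with the market with middlemen `γ = (B,M,S,A,Ah)`:
the worth of a coalition `T` is the maximal value of a `T`-matching. -/
def vGame (A : B → S → ℝ) (Ah : B → M → S → ℝ) (T : Finset (Player B M S)) : ℝ :=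
  sSup { r | ∃ f : MMatch B M S, IsMatching T f ∧ r = mval A Ah f }

/-- `g` is a matching of the coalition `R` in a two-sided assignment market. -/
def IsMatching2 (R : Finset (B ⊕ S)) (g : B → Option S) : Prop :=
  (∀ i k, g i = some k → Sum.inl i ∈ R ∧ Sum.inr k ∈ R) ∧
  (∀ i i' k, g i = some k → g i' = some k → i = i')

/-- The value of a two-sided matching with valuation matrix `As`. -/
def m2val (As : B → S → ℝ) (g : B → Option S) : ℝ :=
  ∑ i, (match g i with
    | none => 0
    | some k => As i k)

/-- The assignment game `w_{γ*}` of the two-sided assignment market `(B,S,As)`. -/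
def wGame (As : B → S → ℝ) (R : Finset (B ⊕ S)) : ℝ :=
  sSup { r | ∃ g : B → Option S, IsMatching2 R g ∧ r = m2val As g }

/-- The matrix `A*` of the associated two-sided assignment market:
`a*_{ik} = max_{j ∈ M} â_{ijk}`. -/
def Astar [Nonempty M] (Ah : B → M → S → ℝ) (i : B) (k : S) : ℝ :=
  Finset.univ.sup' Finset.univ_nonempty fun j => Ah i j k

/-- The two-sided matching `μ*` induced by a matching `μ` of the market with middlemen:
keep all matched buyer–seller pairs (dropping the middlemen). -/
def star (f : MMatch B M S) : B → Option S := fun i => (f i).map Prod.snd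

/-- `m(i,k)`: the lowest-indexed middleman `j` maximizing `â_{ijk}`. -/
def bestMid [Nonempty M] [LinearOrder M] (Ah : B → M → S → ℝ) (i : B) (k : S) : M :=
  (Finset.univ.filter fun j => ∀ j' : M, Ah i j' k ≤ Ah i j k).min' (by
    obtain ⟨j, -, hj⟩ := Finset.exists_max_image (Finset.univ : Finset M)
      (fun j => Ah i j k) Finset.univ_nonempty
    exact ⟨j, Finset.mem_filter.mpr ⟨Finset.mem_univ _, fun j' => hj j' (Finset.mem_univ _)⟩⟩)

/-- The matching `σ^△` of the market with middlemen induced by a two-sided matching `σ`: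
each matched pair `{i,k}` of `σ` trades through the best middleman `m(i,k)`
(and every other middleman is a singleton). -/
def triangle [Nonempty M] [LinearOrder M] (Ah : B → M → S → ℝ) (g : B → Option S) :
    MMatch B M S :=
  fun i => (g i).map fun k => (some (bestMid Ah i k), k)

/-- The core of a TU game on the finite player set `P`. -/
def core {P : Type*} [Fintype P] (v : Finset P → ℝ) : Set (P → ℝ) :=
  { x | ∑ t, x t = v Finset.univ ∧ ∀ T : Finset P, v T ≤ ∑ t ∈ T, x t }

/-- Augment a payoff vector of the two-sided market with zero payoffs to all middlemen. -/
def aug (xz : B ⊕ S → ℝ) : Player B M S → ℝ := fun t =>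
  match t with
  | Sum.inl i => xz (Sum.inl i)
  | Sum.inr (Sum.inl _) => 0
  | Sum.inr (Sum.inr k) => xz (Sum.inr k)

/-- Restrict a payoff vector of the market with middlemen to the buyers and sellers. -/
def restrictBS (X : Player B M S → ℝ) : B ⊕ S → ℝ := fun t =>
  match t with
  | Sum.inl i => X (buyer i)
  | Sum.inr k => X (seller k)

/-- The set `T ∩ (B ∪ S)` of buyers and sellers of a coalition `T`. -/
def bsPart (T : Finset (Player B M S)) : Finset (B ⊕ S) :=
  Finset.univ.filter fun t =>
    match t with
    | Sum.inl i => buyer i ∈ T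
    | Sum.inr k => (seller k : Player B M S) ∈ T

/-- The coalition `R ∪ M` consisting of the buyers and sellers of `R` together with
all middlemen. -/
def withAllMid (R : Finset (B ⊕ S)) : Finset (Player B M S) :=
  Finset.univ.filter fun t =>
    match t with
    | Sum.inl i => Sum.inl i ∈ R
    | Sum.inr (Sum.inl _) => True
    | Sum.inr (Sum.inr k) => Sum.inr k ∈ R

end Middlemen

namespace Middlemen

/-! Forgetting the middlemen turns a `T`-matching `μ` of the market into a two-sided matching `μ*`
of `T ∩ (B ∪ S)`. Every trade of `μ`, direct or mediated, is worth at most the entry of `A*` at its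
buyer-seller pair, so the value of `μ` is at most that of `μ*`. -/

section

variable {B M S : Type*}

theorem isMatching_none (T : Finset (Player B M S)) : IsMatching T fun _ => none :=
  ⟨by simp, by simp⟩

theorem exists_eq_some_of_star_eq_some {f : MMatch B M S} {i : B} {k : S}
    (h : star f i = some k) : ∃ o, f i = some (o, k) := by
  obtain ⟨⟨o, k⟩, hfi, rfl⟩ := Option.map_eq_some_iff.mp h
  exact ⟨o, hfi⟩

theorem le_Astar [Fintype M] [Nonempty M] (Ah : B → M → S → ℝ) (i : B) (j : M) (k : S) :
    Ah i j k ≤ Astar Ah i k :=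
  Finset.le_sup' (fun j => Ah i j k) (Finset.mem_univ j)

theorem mval_le_m2val_star [Fintype B] {A As : B → S → ℝ} {Ah : B → M → S → ℝ}
    (hA : ∀ i k, A i k ≤ As i k) (hAh : ∀ i j k, Ah i j k ≤ As i k) (f : MMatch B M S) :
    mval A Ah f ≤ m2val As (star f) := by
  refine Finset.sum_le_sum fun i _ => ?_
  simp only [star]
  rcases f i with _ | ⟨_ | j, k⟩
  · exact le_rfl
  · exact hA i k
  · exact hAh i j k

theorem IsMatching2.m2val_le_wGame [Fintype B] [Finite S] {R : Finset (B ⊕ S)} {g : B → Option S}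
    (hg : IsMatching2 R g) (As : B → S → ℝ) : m2val As g ≤ wGame As R := by
  have hbdd : BddAbove {r | ∃ g, IsMatching2 R g ∧ r = m2val As g} := by
    refine (Set.finite_range (m2val As)).bddAbove.mono ?_
    rintro _ ⟨g, -, rfl⟩
    exact Set.mem_range_self g
  exact le_csSup hbdd ⟨g, hg, rfl⟩

variable [Fintype B] [Fintype S]

@[simp]
theorem inl_mem_bsPart {T : Finset (Player B M S)} {i : B} :
    Sum.inl i ∈ bsPart T ↔ buyer i ∈ T := by
  simp [bsPart]

@[simp]
theorem inr_mem_bsPart {T : Finset (Player B M S)} {k : S} :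
    Sum.inr k ∈ bsPart T ↔ seller k ∈ T := by
  simp [bsPart]

theorem IsMatching.star {T : Finset (Player B M S)} {f : MMatch B M S} (hf : IsMatching T f) :
    IsMatching2 (bsPart T) (star f) := by
  obtain ⟨hT, hinj⟩ := hf
  refine ⟨fun i k hik => ?_, fun i i' k hik hi'k => ?_⟩
  · obtain ⟨o, hfi⟩ := exists_eq_some_of_star_eq_some hik
    obtain ⟨hi, hk, -⟩ := hT i o k hfi
    exact ⟨inl_mem_bsPart.mpr hi, inr_mem_bsPart.mpr hk⟩
  · obtain ⟨o, hfi⟩ := exists_eq_some_of_star_eq_some hik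
    obtain ⟨o', hfi'⟩ := exists_eq_some_of_star_eq_some hi'k
    exact hinj i i' o o' k hfi hfi'

theorem vGame_le_wGame_bsPart_general {A As : B → S → ℝ} {Ah : B → M → S → ℝ}
    (hA : ∀ i k, A i k ≤ As i k) (hAh : ∀ i j k, Ah i j k ≤ As i k)
    (T : Finset (Player B M S)) : vGame A Ah T ≤ wGame As (bsPart T) := by
  refine csSup_le ⟨_, _, isMatching_none T, rfl⟩ ?_
  rintro _ ⟨f, hf, rfl⟩
  calc
    mval A Ah f ≤ m2val As (star f) := mval_le_m2val_star hA hAh f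
    _ ≤ wGame As (bsPart T) := hf.star.m2val_le_wGame As

end

/-- for every coalition `T`, `v_γ(T) ≤ w_γ*(T ∩ (B ∪ S))`. -/
theorem vGame_le_wGame_bsPart
    {B M S : Type*} [Fintype B] [Fintype M] [Fintype S]
    [Nonempty B] [Nonempty M] [Nonempty S]
    (A : B → S → ℝ) (Ah : B → M → S → ℝ)
    (hA : ∀ i k, 0 ≤ A i k) (hAh : ∀ i j k, A i k ≤ Ah i j k) :
    ∀ T : Finset (Player B M S), vGame A Ah T ≤ wGame (Astar Ah) (bsPart T) :=
  vGame_le_wGame_bsPart_general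
    (fun i k => (hAh i (Classical.arbitrary M) k).trans (le_Astar Ah i _ k)) (le_Astar Ah)

end Middlemen
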